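/- Let n be a positive integer, L an n×n real symmetric positive definite matrix, √(L⁻¹) the unique symmetric positive definite square root of L⁻¹, a ∈ ℝⁿ nonzero, g ∈ ℝⁿ, τ > 0, and c ∈ ℝ; set b̂ = √(L⁻¹)a / ‖√(L⁻¹)a‖. Then the Karush–Kuhn–Tucker system in the unknowns (δ, λ) ∈ ℝⁿ × ℝ given by { a·δ = c ; g + (1/(2τ)) Lδ + λ a = 0 } has a unique solution, namely λ = −( a·(L⁻¹g) + c/(2τ) ) / ‖√(L⁻¹)a‖² and δ = −2τ √(L⁻¹) (I − b̂⊗b̂) √(L⁻¹) g + c · L⁻¹a / ‖√(L⁻¹)a‖². -/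

import Mathlib

open Matrix

/-!
Stationarity is solved for `δ` by inverting `L`; the constraint then becomes a scalar affine
equation for `λ` whose leading coefficient is a multiple of the Schur complement
`a · L⁻¹a = ‖√(L⁻¹)a‖²`. The closed form of `δ` comes from the rank-one identity
`√(L⁻¹) (I − b̂⊗b̂) √(L⁻¹) = L⁻¹ − (L⁻¹a)⊗(L⁻¹a) / ‖√(L⁻¹)a‖²`.
-/

section BorderedSystem

variable {ι : Type*} [Fintype ι] [DecidableEq ι]

theorem add_mulVec_add_smul_eq_zero_iff {R : Type*} [CommRing R] {A : Matrix ι ι R}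
    (hA : IsUnit A) (g a x : ι → R) (μ : R) :
    g + A *ᵥ x + μ • a = 0 ↔ x = -(A⁻¹ *ᵥ g + μ • A⁻¹ *ᵥ a) := by
  have hdet : IsUnit A.det := (isUnit_iff_isUnit_det A).mp hA
  have hsolve : A *ᵥ (-(A⁻¹ *ᵥ g + μ • A⁻¹ *ᵥ a)) = -(g + μ • a) := by
    rw [mulVec_neg, mulVec_add, mulVec_smul, mulVec_mulVec, mulVec_mulVec,
      mul_nonsing_inv A hdet, one_mulVec, one_mulVec]
  rw [add_right_comm, add_comm, add_eq_zero_iff_eq_neg, ← hsolve,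
    (mulVec_injective_of_isUnit hA).eq_iff]

theorem bordered_system_iff {K : Type*} [Field K] {A : Matrix ι ι K} (hA : IsUnit A)
    {a b : ι → K} (hba : b ⬝ᵥ A⁻¹ *ᵥ a ≠ 0) (g x : ι → K) (c μ : K) :
    (b ⬝ᵥ x = c ∧ g + A *ᵥ x + μ • a = 0) ↔
      x = -(A⁻¹ *ᵥ g + μ • A⁻¹ *ᵥ a) ∧ μ = -((b ⬝ᵥ A⁻¹ *ᵥ g + c) / (b ⬝ᵥ A⁻¹ *ᵥ a)) := by
  rw [add_mulVec_add_smul_eq_zero_iff hA, and_comm]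
  refine and_congr_right fun hx ↦ ?_
  rw [hx, dotProduct_neg, dotProduct_add, dotProduct_smul, smul_eq_mul, ← neg_div,
    eq_div_iff hba]
  constructor <;> intro h <;> linear_combination -h

theorem bordered_smul_system_iff {K : Type*} [Field K] {A : Matrix ι ι K} (hA : IsUnit A)
    {a b : ι → K} (hba : b ⬝ᵥ A⁻¹ *ᵥ a ≠ 0) {k : K} (hk : k ≠ 0) (g x : ι → K) (c μ : K) :
    (b ⬝ᵥ x = c ∧ g + k • A *ᵥ x + μ • a = 0) ↔
      x = -(k⁻¹ • (A⁻¹ *ᵥ g + μ • A⁻¹ *ᵥ a)) ∧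
        μ = -((b ⬝ᵥ A⁻¹ *ᵥ g + k * c) / (b ⬝ᵥ A⁻¹ *ᵥ a)) := by
  have hinv : (k • A)⁻¹ = k⁻¹ • A⁻¹ :=
    inv_smul' A (Units.mk0 k hk) ((isUnit_iff_isUnit_det A).mp hA)
  have hschur : b ⬝ᵥ (k • A)⁻¹ *ᵥ a = k⁻¹ * (b ⬝ᵥ A⁻¹ *ᵥ a) := by
    rw [hinv, smul_mulVec, dotProduct_smul, smul_eq_mul]
  have hquot : (k⁻¹ * (b ⬝ᵥ A⁻¹ *ᵥ g) + c) / (k⁻¹ * (b ⬝ᵥ A⁻¹ *ᵥ a)) =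
      (b ⬝ᵥ A⁻¹ *ᵥ g + k * c) / (b ⬝ᵥ A⁻¹ *ᵥ a) := by
    field_simp
  have hkA : IsUnit (k • A) := hA.smul (Units.mk0 k hk)
  rw [← smul_mulVec, bordered_system_iff hkA (hschur ▸ mul_ne_zero (inv_ne_zero hk) hba),
    hschur, hinv]
  simp only [smul_mulVec, dotProduct_smul, smul_eq_mul, hquot, smul_add, smul_comm μ]

end BorderedSystem

section SymmetricFactor

variable {ι : Type*} [Fintype ι]

theorem mulVec_dotProduct_mulVec_of_isSymm {R : Type*} [CommSemiring R] {S : Matrix ι ι R}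
    (hS : S.IsSymm) (x y : ι → R) : S *ᵥ x ⬝ᵥ S *ᵥ y = x ⬝ᵥ (S * S) *ᵥ y := by
  rw [← mulVec_mulVec, dotProduct_mulVec x, ← mulVec_transpose, hS.eq]

theorem mul_one_sub_smul_vecMulVec_mul_of_isSymm [DecidableEq ι] {R : Type*} [CommRing R]
    {S : Matrix ι ι R} (hS : S.IsSymm) (r : R) (a : ι → R) :
    S * (1 - r • vecMulVec (S *ᵥ a) (S *ᵥ a)) * S =
      S * S - r • vecMulVec ((S * S) *ᵥ a) (a ᵥ* (S * S)) := by
  have hvec : (S *ᵥ a) ᵥ* S = a ᵥ* (S * S) := by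
    rw [← vecMul_vecMul, ← mulVec_transpose S a, hS.eq]
  rw [mul_sub, sub_mul, mul_one, mul_smul_comm, smul_mul_assoc, mul_vecMulVec, vecMulVec_mul,
    hvec, mulVec_mulVec]

end SymmetricFactor

section NormalizedProjection

variable {ι : Type*} [Fintype ι]

theorem vecMulVec_inv_sqrt_smul_self (v : ι → ℝ) :
    vecMulVec ((√(v ⬝ᵥ v))⁻¹ • v) ((√(v ⬝ᵥ v))⁻¹ • v) = (v ⬝ᵥ v)⁻¹ • vecMulVec v v := by
  have hv : 0 ≤ v ⬝ᵥ v := Finset.sum_nonneg fun i _ ↦ mul_self_nonneg (v i)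
  rw [smul_vecMulVec, vecMulVec_smul, smul_smul, ← mul_inv, Real.mul_self_sqrt hv]

theorem mul_one_sub_vecMulVec_normalized_mul_mulVec [DecidableEq ι] {S : Matrix ι ι ℝ}
    (hS : S.IsSymm) (a g : ι → ℝ) :
    let nrm2 : ℝ := S *ᵥ a ⬝ᵥ S *ᵥ a
    let bhat : ι → ℝ := (√nrm2)⁻¹ • S *ᵥ a
    (S * (1 - vecMulVec bhat bhat) * S) *ᵥ g =
      (S * S) *ᵥ g - (nrm2⁻¹ * (a ⬝ᵥ (S * S) *ᵥ g)) • (S * S) *ᵥ a := by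
  intro nrm2 bhat
  rw [vecMulVec_inv_sqrt_smul_self, mul_one_sub_smul_vecMulVec_mul_of_isSymm hS, sub_mulVec,
    smul_mulVec, vecMulVec_mulVec, op_smul_eq_smul, ← dotProduct_mulVec, smul_smul]

end NormalizedProjection

theorem global_mass_balance_KKT_unique_general {ι : Type*} [Fintype ι] [DecidableEq ι]
    {L S : Matrix ι ι ℝ} (hL : IsUnit L) (hS : S.IsSymm) (hSS : S * S = L⁻¹)
    {a : ι → ℝ} (ha : a ≠ 0) (g : ι → ℝ) {τ : ℝ} (hτ : τ ≠ 0) (c : ℝ) :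
    let nrm2 : ℝ := S *ᵥ a ⬝ᵥ S *ᵥ a
    let bhat : ι → ℝ := (√nrm2)⁻¹ • S *ᵥ a
    let δstar : ι → ℝ :=
      (-(2 * τ)) • (S * (1 - vecMulVec bhat bhat) * S) *ᵥ g + (c / nrm2) • L⁻¹ *ᵥ a
    let lamstar : ℝ := -((a ⬝ᵥ L⁻¹ *ᵥ g + c / (2 * τ)) / nrm2)
    ∀ (δ : ι → ℝ) (lam : ℝ),
      (a ⬝ᵥ δ = c ∧ g + (1 / (2 * τ)) • L *ᵥ δ + lam • a = 0) ↔
        (δ = δstar ∧ lam = lamstar) := by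
  intro nrm2 bhat δstar lamstar δ lam
  have hnrm2 : a ⬝ᵥ L⁻¹ *ᵥ a = nrm2 := by
    rw [← hSS, ← mulVec_dotProduct_mulVec_of_isSymm hS]
  have hnrm2_ne : nrm2 ≠ 0 := by
    have hS_unit : IsUnit S :=
      (isUnit_pow_iff two_ne_zero).mp (by rwa [sq, hSS, isUnit_nonsing_inv_iff])
    rwa [Ne, dotProduct_self_eq_zero, ← mulVec_zero S, (mulVec_injective_of_isUnit hS_unit).eq_iff]
  have hproj : (S * (1 - vecMulVec bhat bhat) * S) *ᵥ g =
      L⁻¹ *ᵥ g - (nrm2⁻¹ * (a ⬝ᵥ L⁻¹ *ᵥ g)) • L⁻¹ *ᵥ a :=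
    hSS ▸ mul_one_sub_vecMulVec_normalized_mul_mulVec hS a g
  have hδstar : δstar = -((2 * τ) • (L⁻¹ *ᵥ g + lamstar • L⁻¹ *ᵥ a)) := by
    simp only [δstar, hproj, lamstar]
    match_scalars <;> field_simp
  have hk : 1 / (2 * τ) ≠ 0 := by positivity
  rw [bordered_smul_system_iff hL (hnrm2 ▸ hnrm2_ne) hk, hnrm2, hδstar, one_div, inv_inv,
    inv_mul_eq_div]
  exact and_congr_left fun hlam ↦ by rw [hlam]

/-- The KKT system `{ a·δ = c ; g + (1/(2τ))Lδ + λa = 0 }` of the incremental growth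
problem with global mass balance has the unique solution
`λ = −(a·(L⁻¹g) + c/(2τ))/‖√(L⁻¹)a‖²` and
`δ = −2τ √(L⁻¹)(I − b̂⊗b̂)√(L⁻¹) g + c L⁻¹a/‖√(L⁻¹)a‖²`,
where `S = √(L⁻¹)` is the unique symmetric positive definite square root of `L⁻¹`. -/
theorem global_mass_balance_KKT_unique (n : ℕ) (hn : 0 < n)
    (L S : Matrix (Fin n) (Fin n) ℝ) (hL : L.PosDef)
    (hS : S.PosDef) (hSS : S * S = L⁻¹)
    (a : Fin n → ℝ) (ha : a ≠ 0) (g : Fin n → ℝ) (τ : ℝ) (hτ : 0 < τ) (c : ℝ) :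
    let nrm2 : ℝ := S.mulVec a ⬝ᵥ S.mulVec a
    let bhat : Fin n → ℝ := (Real.sqrt nrm2)⁻¹ • S.mulVec a
    let δstar : Fin n → ℝ :=
      (-(2 * τ)) • (S * ((1 : Matrix (Fin n) (Fin n) ℝ) - vecMulVec bhat bhat) * S).mulVec g
        + (c / nrm2) • L⁻¹.mulVec a
    let lamstar : ℝ := -((a ⬝ᵥ L⁻¹.mulVec g + c / (2 * τ)) / nrm2)
    ∀ (δ : Fin n → ℝ) (lam : ℝ),
      (a ⬝ᵥ δ = c ∧ g + (1 / (2 * τ)) • L.mulVec δ + lam • a = 0) ↔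
        (δ = δstar ∧ lam = lamstar) := by
  exact global_mass_balance_KKT_unique_general hL.isUnit (isHermitian_iff_isSymm.mp hS.isHermitian)
    hSS ha g hτ.ne' c
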